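/- Let ξ be a centered Gaussian random vector in ℝ^d with covariance matrix C, let A be a symmetric real d×d matrix, and set Θ(n) = E⟨ξ, Aξ⟩^n (with Θ(0) = 1) and R_j = Tr((AC)^j). Then for every n ≥ 1, Θ(n) = Σ_{j=1}^{n} 2^{j−1} (n−1)^{\underline{j−1}} R_j Θ(n−j), where a^{\underline{b}} = a(a−1)⋯(a−b+1) denotes the falling factorial. -/

import Mathlib

open MeasureTheory ProbabilityTheory Filter Matrix

noncomputable section

/-- `ξ` is a centered Gaussian random vector with covariance matrix `C`. -/
def IsCenteredGaussian {Ω : Type*} [MeasurableSpace Ω] (P : Measure Ω) {n : ℕ}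
    (ξ : Ω → Fin n → ℝ) (C : Matrix (Fin n) (Fin n) ℝ) : Prop :=
  Measurable ξ ∧
    ∀ v : Fin n → ℝ,
      P.map (fun ω => v ⬝ᵥ ξ ω) = gaussianReal 0 (Real.toNNReal (v ⬝ᵥ C.mulVec v))

/-!
Gaussian integration by parts, `E[ξᵢ p(ξ)] = ∑ⱼ Cᵢⱼ E[∂ⱼp(ξ)]`, holds for every polynomial `p`: for
independent coordinates it reduces to the one-dimensional case, and writing the law as the image of
the standard Gaussian under the square root of `C` gives the general case by the chain rule. With
`q(x) = xᵀAx` and `∂ⱼq = 2 (Ax)ⱼ`, applying it to `ξᵀBξ · q(ξ)ᵏ` gives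

`E[ξᵀBξ q(ξ)ᵏ] = Tr(BC) Θ(k) + 2k E[ξᵀ(ACB)ξ q(ξ)ᵏ⁻¹]`.

Iterating from `B = A` replaces the matrix by `(AC)ʲA` after `j` steps, with accumulated
factor `2ʲ k(k-1)⋯(k-j+1)`.
-/

section GaussianReal

open scoped NNReal

variable {μ : ℝ} {v : ℝ≥0}

theorem hasDerivAt_gaussianPDFReal (μ : ℝ) (v : ℝ≥0) (x : ℝ) :
    HasDerivAt (gaussianPDFReal μ v) (-((x - μ) / v) * gaussianPDFReal μ v x) x := by
  have hexponent : HasDerivAt (fun y : ℝ ↦ -(y - μ) ^ 2 / (2 * v)) (-((x - μ) / v)) x := by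
    refine ((((hasDerivAt_id x).sub_const μ).pow 2).neg.div_const (2 * (v : ℝ))).congr_deriv ?_
    simp only [id, Nat.cast_ofNat, Nat.add_one_sub_one, pow_one, mul_one]
    rw [neg_div, mul_div_mul_left _ _ two_ne_zero]
  exact (hexponent.exp.const_mul _).congr_deriv (by rw [gaussianPDFReal]; ring)

theorem integrable_gaussianReal_iff {f : ℝ → ℝ} (hv : v ≠ 0) :
    Integrable f (gaussianReal μ v) ↔ Integrable (fun x ↦ gaussianPDFReal μ v x * f x) := by
  rw [gaussianReal_of_var_ne_zero _ hv,
    integrable_withDensity_iff_integrable_smul' (measurable_gaussianPDF _ _)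
      (ae_of_all _ fun _ ↦ gaussianPDF_lt_top)]
  simp only [toReal_gaussianPDF, smul_eq_mul]

theorem integral_sub_mul_gaussianReal {f f' : ℝ → ℝ} (hderiv : ∀ x, HasDerivAt f (f' x) x)
    (hf : Integrable f (gaussianReal μ v)) (hf' : Integrable f' (gaussianReal μ v))
    (hxf : Integrable (fun x ↦ (x - μ) * f x) (gaussianReal μ v)) :
    ∫ x, (x - μ) * f x ∂gaussianReal μ v = v * ∫ x, f' x ∂gaussianReal μ v := by
  obtain rfl | hv := eq_or_ne v 0
  · simp
  rw [integrable_gaussianReal_iff hv] at hf hf' hxf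
  set φ := gaussianPDFReal μ v
  have hv' : (v : ℝ) ≠ 0 := mod_cast hv
  have hφf (x : ℝ) : HasDerivAt (fun x ↦ v * (φ x * f x))
      (v * (φ x * f' x) - φ x * ((x - μ) * f x)) x :=
    (((hasDerivAt_gaussianPDFReal μ v x).mul (hderiv x)).const_mul (v : ℝ)).congr_deriv
      (by field_simp; ring)
  have hzero := integral_eq_zero_of_hasDerivAt_of_integrable hφf
    ((hf'.const_mul _).sub hxf) (hf.const_mul _)
  rw [integral_sub (hf'.const_mul _) hxf, integral_const_mul, sub_eq_zero] at hzero
  simpa only [integral_gaussianReal_eq_integral_smul hv, smul_eq_mul] using hzero.symm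

theorem integrable_pow_gaussianReal (μ : ℝ) (v : ℝ≥0) (k : ℕ) :
    Integrable (fun x ↦ x ^ k) (gaussianReal μ v) :=
  (integrable_norm_iff (by fun_prop)).1 <| by
    simpa [norm_pow] using (memLp_id_gaussianReal (μ := μ) (v := v) k).integrable_norm_pow'

theorem integral_pow_succ_gaussianReal (v : ℝ≥0) (k : ℕ) :
    ∫ x, x ^ (k + 1) ∂gaussianReal 0 v = v * (k * ∫ x, x ^ (k - 1) ∂gaussianReal 0 v) := by
  simpa [pow_succ', integral_const_mul] using
    integral_sub_mul_gaussianReal (μ := 0) (v := v) (hasDerivAt_pow k)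
      (integrable_pow_gaussianReal 0 v k) ((integrable_pow_gaussianReal 0 v (k - 1)).const_mul k)
      (by simpa [pow_succ'] using integrable_pow_gaussianReal 0 v (k + 1))

end GaussianReal

section Matrix

variable {R ι κ : Type*} [CommSemiring R] [Fintype ι]

theorem sum_sum_mul_mul_eq_dotProduct_mulVec [Fintype κ] (M : Matrix ι κ R) (u : ι → R)
    (w : κ → R) : ∑ i, ∑ j, M i j * (u i * w j) = u ⬝ᵥ M *ᵥ w := by
  simp only [dotProduct, mulVec, Finset.mul_sum, mul_left_comm]

theorem mulVec_dotProduct_mulVec_mulVec {S A : Matrix ι ι R} (hS : S.IsSymm) (hA : A.IsSymm)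
    (B : Matrix ι ι R) (x : ι → R) :
    (B *ᵥ x) ⬝ᵥ S *ᵥ (A *ᵥ x) = x ⬝ᵥ (A * S * B) *ᵥ x := by
  rw [← mulVec_mulVec, dotProduct_mulVec x, ← mulVec_transpose, transpose_mul, hA.eq, hS.eq,
    mulVec_mulVec, dotProduct_comm]

end Matrix

section MvPolynomial

open MvPolynomial

variable {R ι κ : Type*} [CommSemiring R]

theorem pderiv_bind₁ [Fintype ι] (f : ι → MvPolynomial κ R) (k : κ) (p : MvPolynomial ι R) :
    pderiv k (bind₁ f p) = ∑ i, pderiv k (f i) * bind₁ f (pderiv i p) := by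
  classical
  induction p using MvPolynomial.induction_on with
  | C a => simp
  | add p q hp hq => simp only [map_add, hp, hq, mul_add, Finset.sum_add_distrib]
  | mul_X p j hp =>
    have hX : ∑ i, pderiv k (f i) * bind₁ f (p * pderiv i (X j)) =
        bind₁ f p * pderiv k (f j) := by
      rw [Finset.sum_eq_single_of_mem j (Finset.mem_univ j) fun i _ hij ↦ by
        rw [pderiv_X_of_ne hij.symm, mul_zero, map_zero, mul_zero]]
      rw [pderiv_X_self, mul_one, mul_comm]
    rw [map_mul, bind₁_X_right, pderiv_mul, hp, Finset.sum_mul, ← hX, ← Finset.sum_add_distrib]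
    exact Finset.sum_congr rfl fun i _ ↦ by
      rw [pderiv_mul, map_add, map_mul _ _ (X j), bind₁_X_right]; ring

theorem pderiv_toMvPolynomial [Fintype κ] (M : Matrix ι κ R) (i : ι) (k : κ) :
    pderiv k (M.toMvPolynomial i) = C (M i k) := by
  classical
  simp [toMvPolynomial, ← C_mul_X_eq_monomial, pderiv_X, Pi.single_apply]

theorem eval_bind₁_toMvPolynomial [Fintype κ] (M : Matrix ι κ R) (x : κ → R)
    (p : MvPolynomial ι R) : eval x (bind₁ M.toMvPolynomial p) = eval (M *ᵥ x) p := by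
  rw [eval, eval₂Hom_bind₁]
  simp [toMvPolynomial_eval_eq_apply]

/-- The quadratic form `x ↦ xᵀ M x` as a polynomial in the coordinates of `x`, so that the gradient
in Gaussian integration by parts is the formal one. -/
def quadraticFormPolynomial [Fintype ι] (M : Matrix ι ι R) : MvPolynomial ι R :=
  ∑ i, X i * M.toMvPolynomial i

variable [Fintype ι]

theorem eval_quadraticFormPolynomial (M : Matrix ι ι R) (x : ι → R) :
    eval x (quadraticFormPolynomial M) = x ⬝ᵥ M *ᵥ x := by
  simp [quadraticFormPolynomial, dotProduct, toMvPolynomial_eval_eq_apply]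

theorem pderiv_quadraticFormPolynomial {M : Matrix ι ι R} (hM : M.IsSymm) (i : ι) :
    pderiv i (quadraticFormPolynomial M) = 2 * M.toMvPolynomial i := by
  classical
  have hcol : ∑ j, X j * C (M j i) = M.toMvPolynomial i := by
    simp [toMvPolynomial, ← C_mul_X_eq_monomial, mul_comm, hM.apply]
  simp [quadraticFormPolynomial, pderiv_toMvPolynomial, pderiv_X, Pi.single_apply,
    Finset.sum_add_distrib, hcol, two_mul]

theorem sum_sum_mul_eval_pderiv {S A : Matrix ι ι R} (hS : S.IsSymm) (hA : A.IsSymm)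
    (B : Matrix ι ι R) (k : ℕ) (x : ι → R) :
    ∑ i, ∑ j, S i j * eval x (pderiv j (B.toMvPolynomial i * quadraticFormPolynomial A ^ k)) =
      (B * S).trace * (x ⬝ᵥ A *ᵥ x) ^ k +
        2 * k * ((x ⬝ᵥ (A * S * B) *ᵥ x) * (x ⬝ᵥ A *ᵥ x) ^ (k - 1)) := by
  have htrace : ∑ i, ∑ j, S i j * B i j = (B * S).trace := by
    simp only [Matrix.trace, diag_apply, Matrix.mul_apply, mul_comm, hS.apply]
  have hterm (i j : ι) :
      eval x (pderiv j (B.toMvPolynomial i * quadraticFormPolynomial A ^ k)) =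
        B i j * (x ⬝ᵥ A *ᵥ x) ^ k +
          (B *ᵥ x) i * (A *ᵥ x) j * (2 * k * (x ⬝ᵥ A *ᵥ x) ^ (k - 1)) := by
    simp only [pderiv_mul, pderiv_toMvPolynomial, pderiv_pow, pderiv_quadraticFormPolynomial hA,
      map_add, map_mul, map_pow, eval_C, eval_quadraticFormPolynomial, map_natCast, map_ofNat,
      toMvPolynomial_eval_eq_apply]
    ring
  calc ∑ i, ∑ j, S i j * eval x (pderiv j (B.toMvPolynomial i * quadraticFormPolynomial A ^ k))
    _ = (∑ i, ∑ j, S i j * B i j) * (x ⬝ᵥ A *ᵥ x) ^ k +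
        (∑ i, ∑ j, S i j * ((B *ᵥ x) i * (A *ᵥ x) j)) * (2 * k * (x ⬝ᵥ A *ᵥ x) ^ (k - 1)) := by
      simp only [hterm, mul_add, Finset.sum_add_distrib, Finset.sum_mul, mul_assoc]
    _ = _ := by
      rw [htrace, sum_sum_mul_mul_eq_dotProduct_mulVec, mulVec_dotProduct_mulVec_mulVec hS hA]
      ring

end MvPolynomial

section Pi

open MvPolynomial
open scoped NNReal

variable {ι : Type*} [Fintype ι]

theorem integral_eval_monomial_pi (μ : ι → Measure ℝ) [∀ i, SigmaFinite (μ i)] (s : ι →₀ ℕ)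
    (a : ℝ) :
    ∫ x, eval x (monomial s a) ∂Measure.pi μ = a * ∏ i, ∫ x, x ^ s i ∂μ i := by
  simp only [eval_monomial, Finsupp.prod_pow, integral_const_mul]
  rw [integral_fintype_prod_eq_prod (fun i (x : ℝ) ↦ x ^ s i)]

theorem integrable_eval_pi {μ : ι → Measure ℝ} [∀ i, SigmaFinite (μ i)]
    (hμ : ∀ i k, Integrable (fun x ↦ x ^ k) (μ i)) (p : MvPolynomial ι ℝ) :
    Integrable (fun x ↦ eval x p) (Measure.pi μ) := by
  induction p using MvPolynomial.induction_on' with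
  | monomial s a =>
    simp only [eval_monomial, Finsupp.prod_pow]
    exact (Integrable.fintype_prod fun i ↦ hμ i (s i)).const_mul a
  | add p q hp hq =>
    simp only [map_add]
    exact hp.add hq

theorem integrable_eval_pi_gaussianReal (m : ι → ℝ) (v : ι → ℝ≥0) (p : MvPolynomial ι ℝ) :
    Integrable (fun x ↦ eval x p) (Measure.pi fun i ↦ gaussianReal (m i) (v i)) :=
  integrable_eval_pi (fun i ↦ integrable_pow_gaussianReal (m i) (v i)) p

theorem integral_eval_X_mul_pi_gaussianReal (v : ι → ℝ≥0) (i : ι) (p : MvPolynomial ι ℝ) :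
    ∫ x, eval x (X i * p) ∂Measure.pi (fun j ↦ gaussianReal 0 (v j)) =
      v i * ∫ x, eval x (pderiv i p) ∂Measure.pi (fun j ↦ gaussianReal 0 (v j)) := by
  classical
  have hint := integrable_eval_pi_gaussianReal (fun _ ↦ 0) v
  induction p using MvPolynomial.induction_on' with
  | monomial s a =>
    have hexp : ∀ j ∈ Finset.univ.erase i,
        (Finsupp.single i 1 + s : ι →₀ ℕ) j = (s - Finsupp.single i 1 : ι →₀ ℕ) j :=
      fun j hj ↦ by simp [(Finset.ne_of_mem_erase hj).symm]
    rw [pderiv_monomial, X, monomial_mul, one_mul, integral_eval_monomial_pi,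
      integral_eval_monomial_pi, ← Finset.mul_prod_erase _ _ (Finset.mem_univ i),
      ← Finset.mul_prod_erase _ _ (Finset.mem_univ i),
      Finset.prod_congr rfl fun j hj ↦ by rw [hexp j hj]]
    simp only [Finsupp.add_apply, Finsupp.tsub_apply, Finsupp.single_eq_same, add_comm 1,
      integral_pow_succ_gaussianReal]
    ring
  | add p q hp hq =>
    simp only [mul_add, map_add (eval _), map_add (pderiv i)]
    rw [integral_add (hint _) (hint _), integral_add (hint _) (hint _), hp, hq, mul_add]

end Pi

section MultivariateGaussian

open MvPolynomial

variable {ι κ : Type*} [Fintype ι] [Fintype κ]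

theorem continuous_eval_ofLp {ι : Type*} (p : MvPolynomial ι ℝ) :
    Continuous fun x : EuclideanSpace ℝ ι ↦ eval x.ofLp p :=
  (continuous_eval p).comp (PiLp.continuous_ofLp 2 _)

theorem integral_eval_mulVec_X_mul_pi_gaussianReal (T : Matrix ι κ ℝ) (i : ι)
    (p : MvPolynomial ι ℝ) :
    ∫ x, eval (T *ᵥ x) (X i * p) ∂Measure.pi (fun _ : κ ↦ gaussianReal 0 1) =
      ∑ j, (T * Tᵀ) i j *
        ∫ x, eval (T *ᵥ x) (pderiv j p) ∂Measure.pi (fun _ : κ ↦ gaussianReal 0 1) := by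
  set μ := Measure.pi (fun _ : κ ↦ gaussianReal 0 1)
  have hint (q : MvPolynomial κ ℝ) : Integrable (fun x ↦ eval x q) μ :=
    integrable_eval_pi_gaussianReal _ _ q
  have hintT (q : MvPolynomial ι ℝ) : Integrable (fun x ↦ eval (T *ᵥ x) q) μ := by
    simpa only [eval_bind₁_toMvPolynomial] using hint (bind₁ T.toMvPolynomial q)
  have hX (x : κ → ℝ) : eval (T *ᵥ x) (X i * p) =
      ∑ k, T i k * eval x (X k * bind₁ T.toMvPolynomial p) := by
    simp [eval_bind₁_toMvPolynomial, mulVec, dotProduct, Finset.sum_mul, mul_assoc]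
  have hchain (k : κ) (x : κ → ℝ) : eval x (pderiv k (bind₁ T.toMvPolynomial p)) =
      ∑ j, T j k * eval (T *ᵥ x) (pderiv j p) := by
    simp [pderiv_bind₁, pderiv_toMvPolynomial, eval_bind₁_toMvPolynomial]
  calc ∫ x, eval (T *ᵥ x) (X i * p) ∂μ
    _ = ∑ k, T i k * ∫ x, eval x (X k * bind₁ T.toMvPolynomial p) ∂μ := by
      simp only [hX, integral_finsetSum _ fun k _ ↦ (hint (X k * _)).const_mul _,
        integral_const_mul]
    _ = ∑ k, T i k * ∫ x, eval x (pderiv k (bind₁ T.toMvPolynomial p)) ∂μ := by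
      simp only [μ, integral_eval_X_mul_pi_gaussianReal, NNReal.coe_one, one_mul]
    _ = ∑ k, T i k * ∑ j, T j k * ∫ x, eval (T *ᵥ x) (pderiv j p) ∂μ := by
      simp only [hchain, integral_finsetSum _ fun j _ ↦ (hintT (pderiv j p)).const_mul _,
        integral_const_mul]
    _ = ∑ j, (T * Tᵀ) i j * ∫ x, eval (T *ᵥ x) (pderiv j p) ∂μ := by
      simp only [Matrix.mul_apply, transpose_apply, Finset.mul_sum, Finset.sum_mul, mul_assoc]
      exact Finset.sum_comm

open scoped MatrixOrder

variable [DecidableEq ι] {S : Matrix ι ι ℝ}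

theorem multivariateGaussian_zero_eq_map_pi (S : Matrix ι ι ℝ) :
    multivariateGaussian 0 S = (Measure.pi fun _ ↦ gaussianReal 0 1).map
      (fun x ↦ WithLp.toLp 2 (CFC.sqrt S *ᵥ x)) := by
  rw [multivariateGaussian, ← map_pi_eq_stdGaussian, Measure.map_map (by fun_prop) (by fun_prop)]
  simp [Function.comp_def]

theorem integral_eval_multivariateGaussian_zero (S : Matrix ι ι ℝ) (p : MvPolynomial ι ℝ) :
    ∫ x, eval x.ofLp p ∂multivariateGaussian 0 S =
      ∫ x, eval (CFC.sqrt S *ᵥ x) p ∂Measure.pi (fun _ ↦ gaussianReal 0 1) := by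
  rw [multivariateGaussian_zero_eq_map_pi, integral_map (by fun_prop)
    (continuous_eval_ofLp p).aestronglyMeasurable]

theorem integrable_eval_multivariateGaussian_zero (S : Matrix ι ι ℝ) (p : MvPolynomial ι ℝ) :
    Integrable (fun x ↦ eval x.ofLp p) (multivariateGaussian 0 S) := by
  rw [multivariateGaussian_zero_eq_map_pi, integrable_map_measure
    (continuous_eval_ofLp p).aestronglyMeasurable (by fun_prop)]
  simpa only [Function.comp_def, eval_bind₁_toMvPolynomial] using
    integrable_eval_pi_gaussianReal (fun _ ↦ 0) (fun _ ↦ 1) (bind₁ (CFC.sqrt S).toMvPolynomial p)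

theorem integral_eval_X_mul_multivariateGaussian (hS : S.PosSemidef) (i : ι)
    (p : MvPolynomial ι ℝ) :
    ∫ x, eval x.ofLp (X i * p) ∂multivariateGaussian 0 S =
      ∑ j, S i j * ∫ x, eval x.ofLp (pderiv j p) ∂multivariateGaussian 0 S := by
  have hsqrt : CFC.sqrt S * (CFC.sqrt S)ᵀ = S := by
    rw [← conjTranspose_eq_transpose_of_trivial, ← star_eq_conjTranspose,
      (CFC.sqrt_nonneg S).isSelfAdjoint.star_eq, CFC.sqrt_mul_sqrt_self S hS.nonneg]
  simp only [integral_eval_multivariateGaussian_zero,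
    integral_eval_mulVec_X_mul_pi_gaussianReal, hsqrt]

theorem integral_quadraticForm_mul_pow (hS : S.PosSemidef) {A : Matrix ι ι ℝ} (hA : A.IsSymm)
    (B : Matrix ι ι ℝ) (k : ℕ) :
    ∫ x, (x.ofLp ⬝ᵥ B *ᵥ x.ofLp) * (x.ofLp ⬝ᵥ A *ᵥ x.ofLp) ^ k ∂multivariateGaussian 0 S =
      (B * S).trace * ∫ x, (x.ofLp ⬝ᵥ A *ᵥ x.ofLp) ^ k ∂multivariateGaussian 0 S +
        2 * k * ∫ x, (x.ofLp ⬝ᵥ (A * S * B) *ᵥ x.ofLp) * (x.ofLp ⬝ᵥ A *ᵥ x.ofLp) ^ (k - 1)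
          ∂multivariateGaussian 0 S := by
  have hint := integrable_eval_multivariateGaussian_zero S
  have hsymm : S.IsSymm := by simpa [Matrix.IsHermitian, IsSymm] using hS.isHermitian
  let F (i : ι) : MvPolynomial ι ℝ := B.toMvPolynomial i * quadraticFormPolynomial A ^ k
  have hF (x : ι → ℝ) : (x ⬝ᵥ B *ᵥ x) * (x ⬝ᵥ A *ᵥ x) ^ k = ∑ i, eval x (X i * F i) := by
    simp [F, dotProduct, Finset.sum_mul, mul_assoc, eval_quadraticFormPolynomial,
      toMvPolynomial_eval_eq_apply]
  have hpow : Integrable (fun x ↦ (x.ofLp ⬝ᵥ A *ᵥ x.ofLp) ^ k) (multivariateGaussian 0 S) := by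
    simpa [eval_quadraticFormPolynomial] using hint (quadraticFormPolynomial A ^ k)
  have hmul : Integrable (fun x ↦ (x.ofLp ⬝ᵥ (A * S * B) *ᵥ x.ofLp) *
      (x.ofLp ⬝ᵥ A *ᵥ x.ofLp) ^ (k - 1)) (multivariateGaussian 0 S) := by
    simpa [eval_quadraticFormPolynomial] using
      hint (quadraticFormPolynomial (A * S * B) * quadraticFormPolynomial A ^ (k - 1))
  calc ∫ x, (x.ofLp ⬝ᵥ B *ᵥ x.ofLp) * (x.ofLp ⬝ᵥ A *ᵥ x.ofLp) ^ k ∂multivariateGaussian 0 S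
    _ = ∑ i, ∑ j, S i j * ∫ x, eval x.ofLp (pderiv j (F i)) ∂multivariateGaussian 0 S := by
      simp only [hF, integral_finsetSum _ fun i _ ↦ hint (X i * F i),
        integral_eval_X_mul_multivariateGaussian hS]
    _ = ∫ x, ∑ i, ∑ j, S i j * eval x.ofLp (pderiv j (F i)) ∂multivariateGaussian 0 S := by
      have hterm (i j : ι) := (hint (pderiv j (F i))).const_mul (S i j)
      rw [integral_finsetSum _ fun i _ ↦ integrable_finsetSum _ fun j _ ↦ hterm i j]
      simp only [integral_finsetSum _ fun j _ ↦ hterm _ j, integral_const_mul]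
    _ = _ := by
      simp only [F, sum_sum_mul_eval_pderiv hsymm hA]
      rw [integral_add (hpow.const_mul _) (hmul.const_mul _), integral_const_mul,
        integral_const_mul]

theorem integral_quadraticForm_mul_pow_eq_sum (hS : S.PosSemidef) {A : Matrix ι ι ℝ}
    (hA : A.IsSymm) (B : Matrix ι ι ℝ) (k : ℕ) :
    ∫ x, (x.ofLp ⬝ᵥ B *ᵥ x.ofLp) * (x.ofLp ⬝ᵥ A *ᵥ x.ofLp) ^ k ∂multivariateGaussian 0 S =
      ∑ j ∈ Finset.range (k + 1), 2 ^ j * (k.descFactorial j : ℝ) * ((A * S) ^ j * B * S).trace *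
        ∫ x, (x.ofLp ⬝ᵥ A *ᵥ x.ofLp) ^ (k - j) ∂multivariateGaussian 0 S := by
  induction k generalizing B with
  | zero => rw [integral_quadraticForm_mul_pow hS hA]; simp
  | succ k ih =>
    rw [integral_quadraticForm_mul_pow hS hA, Nat.add_sub_cancel, ih,
      Finset.sum_range_succ' _ (k + 1), Finset.mul_sum, add_comm]
    congr 1
    · refine Finset.sum_congr rfl fun j _ ↦ ?_
      rw [Nat.succ_descFactorial_succ, Nat.add_sub_add_right, pow_succ (A * S), ← mul_assoc _ _ B]
      push_cast
      ring
    · simp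

theorem integral_quadraticForm_pow_succ (hS : S.PosSemidef) {A : Matrix ι ι ℝ} (hA : A.IsSymm)
    (k : ℕ) :
    ∫ x, (x.ofLp ⬝ᵥ A *ᵥ x.ofLp) ^ (k + 1) ∂multivariateGaussian 0 S =
      ∑ j ∈ Finset.range (k + 1), 2 ^ j * (k.descFactorial j : ℝ) * ((A * S) ^ (j + 1)).trace *
        ∫ x, (x.ofLp ⬝ᵥ A *ᵥ x.ofLp) ^ (k - j) ∂multivariateGaussian 0 S := by
  simpa only [← pow_succ', ← pow_succ, mul_assoc] using
    integral_quadraticForm_mul_pow_eq_sum hS hA A k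

end MultivariateGaussian

namespace IsCenteredGaussian

variable {Ω : Type*} [MeasurableSpace Ω] {P : Measure Ω} {d : ℕ} {ξ : Ω → Fin d → ℝ}
  {C : Matrix (Fin d) (Fin d) ℝ}

theorem measurable_toLp (hξ : IsCenteredGaussian P ξ C) :
    Measurable fun ω ↦ WithLp.toLp 2 (ξ ω) :=
  (WithLp.measurable_toLp 2 _).comp hξ.1

theorem map_inner_eq_gaussianReal (hξ : IsCenteredGaussian P ξ C) (t : EuclideanSpace ℝ (Fin d)) :
    (P.map fun ω ↦ WithLp.toLp 2 (ξ ω)).map (fun x ↦ inner ℝ t x) =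
      gaussianReal 0 (t.ofLp ⬝ᵥ C *ᵥ t.ofLp).toNNReal := by
  rw [Measure.map_map (by fun_prop) hξ.measurable_toLp, ← hξ.2]
  simp [Function.comp_def, EuclideanSpace.inner_eq_star_dotProduct, dotProduct_comm]

variable [IsFiniteMeasure P]

theorem map_toLp_eq_multivariateGaussian (hξ : IsCenteredGaussian P ξ C) (hC : C.PosSemidef) :
    P.map (fun ω ↦ WithLp.toLp 2 (ξ ω)) = multivariateGaussian 0 C := by
  refine Measure.ext_of_charFun (funext fun t ↦ ?_)
  have hnonneg : 0 ≤ t.ofLp ⬝ᵥ C *ᵥ t.ofLp := by simpa using hC.dotProduct_mulVec_nonneg t.ofLp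
  rw [charFun_eq_charFunDual_toDualMap, charFunDual_eq_charFun_map_one,
    charFun_multivariateGaussian hC]
  change charFun ((P.map _).map (fun x ↦ inner ℝ t x)) 1 = _
  rw [hξ.map_inner_eq_gaussianReal t, charFun_gaussianReal]
  simp [hnonneg]

theorem integral_eval (hξ : IsCenteredGaussian P ξ C) (hC : C.PosSemidef)
    (p : MvPolynomial (Fin d) ℝ) :
    ∫ ω, p.eval (ξ ω) ∂P = ∫ x, p.eval x.ofLp ∂multivariateGaussian 0 C := by
  rw [← hξ.map_toLp_eq_multivariateGaussian hC, integral_map hξ.measurable_toLp.aemeasurable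
    (continuous_eval_ofLp p).aestronglyMeasurable]

end IsCenteredGaussian

theorem stmt11 {Ω : Type*} [MeasurableSpace Ω] (P : Measure Ω) [IsProbabilityMeasure P]
    {d : ℕ} (ξ : Ω → Fin d → ℝ) (C A : Matrix (Fin d) (Fin d) ℝ)
    (hC : C.PosSemidef) (hA : A.IsSymm)
    (hξ : IsCenteredGaussian P ξ C)
    (hint : ∀ k : ℕ, Integrable (fun ω => (ξ ω ⬝ᵥ A.mulVec (ξ ω)) ^ k) P)
    (n : ℕ) (hn : 1 ≤ n) :
    (∫ ω, (ξ ω ⬝ᵥ A.mulVec (ξ ω)) ^ n ∂P) =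
      ∑ j ∈ Finset.Icc 1 n,
        (2 : ℝ) ^ (j - 1) * ((n - 1).descFactorial (j - 1) : ℝ) *
          Matrix.trace ((A * C) ^ j) *
          ∫ ω, (ξ ω ⬝ᵥ A.mulVec (ξ ω)) ^ (n - j) ∂P := by
  obtain ⟨k, rfl⟩ := Nat.exists_eq_add_of_le' hn
  have hmoment (m : ℕ) : ∫ ω, (ξ ω ⬝ᵥ A *ᵥ ξ ω) ^ m ∂P =
      ∫ x, (x.ofLp ⬝ᵥ A *ᵥ x.ofLp) ^ m ∂multivariateGaussian 0 C := by
    simpa only [map_pow, eval_quadraticFormPolynomial] using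
      hξ.integral_eval hC (quadraticFormPolynomial A ^ m)
  simp only [hmoment, integral_quadraticForm_pow_succ hC hA]
  rw [Finset.range_eq_Ico, ← Finset.Ico_add_one_right_eq_Icc, ← Finset.sum_Ico_add' _ 0 (k + 1) 1]
  simp only [Nat.add_sub_cancel, Nat.add_sub_add_right]
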